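/- Let γ ∈ ℝ, q ≥ 3 fixed, and let K be a location-scale invariant kernel, not everywhere constant, with ||K||_a := (E[|K((Z_{q−j:q−1})_{j=1}^{q})|^a])^{1/a} finite for all a > 0 (Z's iid standard GP(γ), Z_{0:q−1} := 0). Let ℓ, m be integers with ℓ ≥ 2 and m ≥ ℓ + q, let Z_1,…,Z_{2m−ℓ} be iid standard GP(γ), Ξ_{ℓ,m} = K_m(Z_{[1:m]}) K_m(Z_{[(m−ℓ+1):(2m−ℓ)]}), and N_{ℓ,m} = Σ_{i=m−ℓ+1}^{m} 1{Z_i is in the top-q of Z_{[1:m]} or of Z_{[(m−ℓ+1):(2m−ℓ)]}}. Then for all a > 2, |E[Ξ_{ℓ,m}; N_{ℓ,m} ≥ 2]| ≤ ||K||_a² (ℓ(ℓ−1)/2)^{1−2/a} (2(2q²−q)/((m−1)(m−ℓ+1)))^{1−2/a}. -/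

import Mathlib

open MeasureTheory ProbabilityTheory Filter Real Set Topology
open scoped ENNReal NNReal Classical

noncomputable section

/-- The `j`-th largest entry of the tuple `x` (`j = 0` gives the maximum, `j = 1` the
second largest, ...); `0` when `j` is out of range. -/
def descStat {m : ℕ} (x : Fin m → ℝ) (j : ℕ) : ℝ :=
  if h : j < m then (x ∘ Tuple.sort x) ⟨m - 1 - j, by omega⟩ else 0

/-- The kernel of degree `m` obtained from `K` by applying it to the top-`q`
(descending) order statistics: `K_m(x_1,…,x_m) = K(x_{m:m},…,x_{m−q+1:m})`. -/
def Km {q : ℕ} (K : (Fin q → ℝ) → ℝ) (m : ℕ) (x : Fin m → ℝ) : ℝ :=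
  K fun j => descStat x (j : ℕ)

/-- `K(a x_1 + b, …, a x_q + b) = K(x_1, …, x_q)` for all `a > 0`, `b ∈ ℝ`. -/
def LocScaleInvariant {q : ℕ} (K : (Fin q → ℝ) → ℝ) : Prop :=
  ∀ a b : ℝ, 0 < a → ∀ x : Fin q → ℝ, K (fun j => a * x j + b) = K x

/-- `h_γ(y) = (y^γ - 1)/γ`, interpreted as `log y` when `γ = 0`. -/
def hGamma (γ : ℝ) (y : ℝ) : ℝ := if γ = 0 then Real.log y else (y ^ γ - 1) / γ

lemma measurable_hGamma (γ : ℝ) : Measurable (hGamma γ) := by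
  unfold hGamma
  split_ifs
  · exact Real.measurable_log
  · fun_prop

/-- The uniform distribution on `(0,1)`. -/
def unif01 : Measure ℝ := volume.restrict (Set.Ioo (0:ℝ) 1)

instance : IsProbabilityMeasure unif01 := ⟨by simp [unif01]⟩

/-- The standard Pareto(1) distribution, with cdf `1 - 1/y` for `y ≥ 1`. -/
def pareto1 : Measure ℝ := ProbabilityTheory.paretoMeasure 1 1

instance : IsProbabilityMeasure pareto1 :=
  ProbabilityTheory.isProbabilityMeasure_paretoMeasure one_pos one_pos

/-- The standard generalized Pareto distribution `GP(γ)`: the law of `h_γ(Y)` for `Y`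
standard Pareto(1). -/
def gpMeasure (γ : ℝ) : Measure ℝ := pareto1.map (hGamma γ)

instance (γ : ℝ) : IsProbabilityMeasure (gpMeasure γ) :=
  Measure.isProbabilityMeasure_map (measurable_hGamma γ).aemeasurable

/-- The unit exponential distribution: the law of `-log U` for `U` uniform on `(0,1)`. -/
def expMeasure1 : Measure ℝ := unif01.map fun u => -Real.log u

instance : IsProbabilityMeasure expMeasure1 :=
  Measure.isProbabilityMeasure_map Real.measurable_log.neg.aemeasurable

/-- The Erlang(q) distribution: the law of the sum of `q` independent unit exponentials. -/
def erlangMeasure (q : ℕ) : Measure ℝ :=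
  (Measure.pi fun _ : Fin q => expMeasure1).map fun e => ∑ i, e i

instance (q : ℕ) : IsProbabilityMeasure (erlangMeasure q) :=
  Measure.isProbabilityMeasure_map
    (Finset.measurable_sum _ fun i _ => measurable_pi_apply i).aemeasurable

/-- The joint law of `r` iid `GP(γ)` random variables. -/
def gpPi (γ : ℝ) (r : ℕ) : Measure (Fin r → ℝ) := Measure.pi fun _ => gpMeasure γ

instance (γ : ℝ) (r : ℕ) : IsProbabilityMeasure (gpPi γ r) := by
  unfold gpPi; infer_instance

/-- The vector `(Z_{q-j:q-1})_{j=1}^{q}`: the descending order statistics of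
`z_1,…,z_{q-1}` with an extra last entry `Z_{0:q-1} := 0`. -/
def refVec {q : ℕ} (z : Fin (q-1) → ℝ) : Fin q → ℝ := fun j => descStat z (j : ℕ)

/-- `θ = E[K((Z_{q-j:q-1})_{j=1}^{q})]` for iid `GP(γ)` variables `Z_1,…,Z_{q-1}`. -/
def thetaK (γ : ℝ) {q : ℕ} (K : (Fin q → ℝ) → ℝ) : ℝ :=
  ∫ z, K (refVec z) ∂(gpPi γ (q-1))

/-- all moments of `K((Z_{q-j:q-1})_{j=1}^{q})` are finite. -/
def MomentCond (γ : ℝ) {q : ℕ} (K : (Fin q → ℝ) → ℝ) : Prop :=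
  ∀ p : ℝ, 0 < p →
    ∫⁻ z, ENNReal.ofReal (|K (refVec z)| ^ p) ∂(gpPi γ (q-1)) < ⊤

/-- The asymptotic variance
`σ²_K(γ) = ∫_0^∞ (E[K̄_{q+1}((Z_{q-j:q-1})_{j=1}^q, h_γ(S_q/x))])² dx`. -/
def sigmaSqK (γ : ℝ) {q : ℕ} (K : (Fin q → ℝ) → ℝ) : ℝ :=
  ∫ x in Set.Ioi (0:ℝ),
    (∫ zs : (Fin (q-1) → ℝ) × ℝ,
        (Km K (q+1) (Fin.snoc (refVec zs.1) (hGamma γ (zs.2 / x))) - thetaK γ K)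
      ∂((gpPi γ (q-1)).prod (erlangMeasure q))) ^ 2

/-- The U-statistic with kernel `K_m` evaluated on the sample `z`. -/
def UStat {q : ℕ} (K : (Fin q → ℝ) → ℝ) (m n : ℕ) (z : Fin n → ℝ) : ℝ :=
  ((n.choose m : ℝ))⁻¹ *
    ∑ I ∈ Finset.powersetCard m (Finset.univ : Finset (Fin n)),
      Km K I.card fun j => z (I.orderIsoOfFin rfl j).1

/-- Condition on the degree sequence: `m = o(n^{1-ε})` and `log n = o(m^{1-δ})`. -/
def DegreeCond (m : ℕ → ℕ) : Prop :=
  ∃ ε > (0:ℝ), ∃ δ > (0:ℝ),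
    Tendsto (fun n => (m n : ℝ) / (n : ℝ) ^ (1 - ε)) atTop (𝓝 0) ∧
    Tendsto (fun n : ℕ => Real.log n / (m n : ℝ) ^ (1 - δ)) atTop (𝓝 0)

/-- `ζ_{m,ℓ} = cov(K_m(Z_S), K_m(Z_{S'}))` for the blocks `S = [1:m]`,
`S' = [(m-ℓ+1):(2m-ℓ)]` (zero-indexed here), which overlap in `ℓ` indices. -/
def zetaCov {Ω : Type*} [MeasurableSpace Ω] (P : Measure Ω) {q : ℕ}
    (K : (Fin q → ℝ) → ℝ) (Z : ℕ → Ω → ℝ) (m ℓ : ℕ) : ℝ :=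
  (∫ ω, Km K m (fun i : Fin m => Z i ω) * Km K m (fun i : Fin m => Z (m - ℓ + i) ω) ∂P)
    - (∫ ω, Km K m (fun i : Fin m => Z i ω) ∂P)
      * (∫ ω, Km K m (fun i : Fin m => Z (m - ℓ + i) ω) ∂P)

/-- Convergence in distribution to a Gaussian, expressed via pointwise convergence of
the cumulative distribution functions (the Gaussian cdf being continuous). -/
def TendstoGaussian {Ω : Type*} [MeasurableSpace Ω] (P : Measure Ω)
    (T : ℕ → Ω → ℝ) (μ : ℝ) (v : ℝ≥0) : Prop :=
  ∀ x : ℝ, Tendsto (fun n => (P {ω | T n ω ≤ x}).toReal) atTop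
    (𝓝 ((gaussianReal μ v (Set.Iic x)).toReal))

/-- Convergence in probability to the constant `c`. -/
def TendstoInProb {Ω : Type*} [MeasurableSpace Ω] (P : Measure Ω)
    (T : ℕ → Ω → ℝ) (c : ℝ) : Prop :=
  ∀ ε : ℝ, 0 < ε → Tendsto (fun n => (P {ω | ε ≤ |T n ω - c|}).toReal) atTop (𝓝 0)


/-- `Z_i` is among the `q` largest of the values `(Z_a)_{a ∈ S}` (for `i ∈ S`):
fewer than `q` members of `S` are strictly larger. -/
def inTopQ (q : ℕ) {Ω : Type*} (Z : ℕ → Ω → ℝ) (S : Finset ℕ) (i : ℕ) (ω : Ω) : Prop :=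
  (S.filter fun a => Z i ω < Z a ω).card < q

/-- The counting variable `N_{ℓ,m}`: the number of `i ∈ [(m-ℓ+1):m]` such that `Z_i` is
in the top-`q` of `Z_{[1:m]}` or of `Z_{[(m-ℓ+1):(2m-ℓ)]}`. -/
def Ncount (q : ℕ) {Ω : Type*} (Z : ℕ → Ω → ℝ) (ℓ m : ℕ) (ω : Ω) : ℕ :=
  ((Finset.Icc (m - ℓ + 1) m).filter fun i =>
    inTopQ q Z (Finset.Icc 1 m) i ω ∨
      inTopQ q Z (Finset.Icc (m - ℓ + 1) (2 * m - ℓ)) i ω).card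

/-- The kernel `K_{|S|}` applied to the subsample `(Z_a)_{a ∈ S}`. -/
def KmOn {q : ℕ} (K : (Fin q → ℝ) → ℝ) {Ω : Type*} (Z : ℕ → Ω → ℝ)
    (S : Finset ℕ) (ω : Ω) : ℝ :=
  Km K S.card fun j => Z (S.orderIsoOfFin rfl j).1 ω

/-- `Ξ_{ℓ,m} = K_m(Z_{[1:m]}) K_m(Z_{[(m-ℓ+1):(2m-ℓ)]})`. -/
def XiRV {q : ℕ} (K : (Fin q → ℝ) → ℝ) {Ω : Type*} (Z : ℕ → Ω → ℝ)
    (ℓ m : ℕ) (ω : Ω) : ℝ :=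
  KmOn K Z (Finset.Icc 1 m) ω * KmOn K Z (Finset.Icc (m - ℓ + 1) (2 * m - ℓ)) ω

/-- `‖K‖_a = (E[|K((Z_{q-j:q-1})_{j=1}^q)|^a])^{1/a}`. -/
def normKa (γ : ℝ) {q : ℕ} (K : (Fin q → ℝ) → ℝ) (a : ℝ) : ℝ :=
  (∫ z, |K (refVec z)| ^ a ∂(gpPi γ (q-1))) ^ (1/a)

/-!
Threshold stability of the generalized Pareto law makes the `q - 1` largest of `n` observations
exceed the `q`-th largest one by rescaled iid copies of themselves. A location-scale invariant
kernel does not see the rescaling, so `K_n(Z_1,…,Z_n)` has the law of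
`K((Z_{q-j:q-1})_{j=1}^q)` for every `n ≥ q`, and Hölder's inequality bounds `|E[Ξ; A]|` by
`‖K‖_a² P(A)^{1-2/a}`.

For `A = {N ≥ 2}`, sum over the pairs of common indices. By exchangeability, `i ≠ j` are both in
the top-`q` of one block of size `m` with probability at most `q(q-1)/(m(m-1))`. The case of `i` in
the top-`q` of one block and `j` in that of the other reduces to two disjoint blocks of sizes `m-1`
and `m-ℓ+1`, which gives `q²/((m-1)(m-ℓ+1))`.
-/

open scoped Finset

/-! ### Order statistics -/

section Counting

variable {ι κ α β : Type*} [Fintype ι] [Fintype κ] [LinearOrder α] [LinearOrder β]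

/-- The number of entries of the tuple `x` lying strictly above the level `v`. -/
def numGT (x : ι → α) (v : α) : ℕ := #{i | v < x i}

/-- The number of entries of the tuple `x` lying at or above the level `v`. -/
def numGE (x : ι → α) (v : α) : ℕ := #{i | v ≤ x i}

lemma numGT_anti (x : ι → α) {v w : α} (h : v ≤ w) : numGT x w ≤ numGT x v :=
  Finset.card_le_card (Finset.monotone_filter_right _ fun _ _ hw => h.trans_lt hw)

lemma numGE_le_numGT (x : ι → α) {v w : α} (h : v < w) : numGE x w ≤ numGT x v :=
  Finset.card_le_card (Finset.monotone_filter_right _ fun _ _ hw => h.trans_le hw)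

lemma numGE_le_card (x : ι → α) (v : α) : numGE x v ≤ Fintype.card ι :=
  Finset.card_le_univ _

lemma numGT_lt_numGE_self (x : ι → α) (i : ι) : numGT x (x i) < numGE x (x i) := by
  refine Finset.card_lt_card ((Finset.ssubset_iff_of_subset ?_).2 ⟨i, ?_, ?_⟩)
  · exact Finset.monotone_filter_right _ fun _ _ => le_of_lt
  · simp
  · simp

lemma numGT_strictMono_comp {f : α → β} (hf : StrictMono f) (x : ι → α) (v : α) :
    numGT (f ∘ x) (f v) = numGT x v := by
  simp [numGT, hf.lt_iff_lt]

lemma numGE_strictMono_comp {f : α → β} (hf : StrictMono f) (x : ι → α) (v : α) :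
    numGE (f ∘ x) (f v) = numGE x v := by
  simp [numGE, hf.le_iff_le]

lemma numGE_comp_embedding_le (x : ι → α) (e : κ ↪ ι) (v : α) :
    numGE (x ∘ e) v ≤ numGE x v := by
  rw [numGE, ← Finset.card_map e]
  exact Finset.card_le_card fun i => by simp +contextual [forall_comm]

lemma numGT_comp_embedding (x : ι → α) (e : κ ↪ ι) {v : α} (h : ∀ i ∉ range e, x i ≤ v) :
    numGT (x ∘ e) v = numGT x v := by
  rw [numGT, ← Finset.card_map e, numGT]
  congr 1
  ext i
  simp only [Finset.mem_map, Finset.mem_filter_univ, Function.comp_apply]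
  refine ⟨fun ⟨_, hk, hki⟩ => hki ▸ hk, fun hi => ?_⟩
  obtain ⟨k, rfl⟩ := not_imp_comm.1 (h i) hi.not_ge
  exact ⟨k, hi, rfl⟩

lemma numGT_comp_equiv (x : ι → α) (e : κ ≃ ι) (v : α) : numGT (x ∘ e) v = numGT x v :=
  numGT_comp_embedding x e.toEmbedding fun i hi => absurd (e.surjective i) hi

lemma numGE_comp_equiv (x : ι → α) (e : κ ≃ ι) (v : α) : numGE (x ∘ e) v = numGE x v := by
  refine (numGE_comp_embedding_le x e.toEmbedding v).antisymm ?_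
  simpa [Function.comp_assoc] using numGE_comp_embedding_le (x ∘ e) e.symm.toEmbedding v

lemma numGT_le_of_monotone {m : ℕ} {y : Fin m → α} (hy : Monotone y) (k : Fin m) :
    numGT y (y k) ≤ m - 1 - k := by
  rw [← Fin.card_Ioi]
  exact Finset.card_le_card fun i hi => Finset.mem_Ioi.2 (hy.reflect_lt (by simpa using hi))

lemma le_numGE_of_monotone {m : ℕ} {y : Fin m → α} (hy : Monotone y) (k : Fin m) :
    m - k ≤ numGE y (y k) := by
  rw [← Fin.card_Ici]
  exact Finset.card_le_card fun i hi => by simpa using hy (Finset.mem_Ici.1 hi)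

end Counting

section DescStat

variable {m r : ℕ}

lemma descStat_eq_iff (x : Fin m → ℝ) (hr : r < m) {v : ℝ} :
    descStat x r = v ↔ numGT x v ≤ r ∧ r < numGE x v := by
  have hle : numGT x (descStat x r) ≤ r := by
    rw [descStat, dif_pos hr, ← numGT_comp_equiv x (Tuple.sort x)]
    refine (numGT_le_of_monotone (Tuple.monotone_sort x) _).trans ?_
    simp only; omega
  have hlt : r < numGE x (descStat x r) := by
    rw [descStat, dif_pos hr, ← numGE_comp_equiv x (Tuple.sort x)]
    refine lt_of_lt_of_le ?_ (le_numGE_of_monotone (Tuple.monotone_sort x) _)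
    simp only; omega
  refine ⟨fun h => h ▸ ⟨hle, hlt⟩, fun ⟨hle_v, hlt_v⟩ => ?_⟩
  rcases lt_trichotomy (descStat x r) v with h | h | h
  · exact absurd (hlt_v.trans_le (numGE_le_numGT x h)) hle.not_gt
  · exact h
  · exact absurd (hlt.trans_le (numGE_le_numGT x h)) hle_v.not_gt

lemma lt_descStat_iff (x : Fin m → ℝ) (hr : r < m) {c : ℝ} :
    c < descStat x r ↔ r < numGT x c := by
  obtain ⟨hle, hlt⟩ := (descStat_eq_iff x hr).1 rfl
  refine ⟨fun h => hlt.trans_le (numGE_le_numGT x h), fun h => ?_⟩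
  by_contra! hc
  exact (h.trans_le (numGT_anti x hc)).not_ge hle

lemma descStat_strictMono_comp {f : ℝ → ℝ} (hf : StrictMono f) (x : Fin m → ℝ) (hr : r < m) :
    descStat (f ∘ x) r = f (descStat x r) := by
  rw [descStat_eq_iff _ hr, numGT_strictMono_comp hf, numGE_strictMono_comp hf]
  exact (descStat_eq_iff x hr).1 rfl

lemma descStat_of_le (x : Fin m → ℝ) (hr : m ≤ r) : descStat x r = 0 :=
  dif_neg hr.not_gt

lemma exists_eq_descStat (x : Fin m → ℝ) (hr : r < m) : ∃ i, x i = descStat x r := by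
  rw [descStat, dif_pos hr]
  exact ⟨_, rfl⟩

lemma measurable_numGT {ι δ : Type*} [Fintype ι] [MeasurableSpace δ] {x : δ → ι → ℝ} {v : δ → ℝ}
    (hx : Measurable x) (hv : Measurable v) : Measurable fun d => numGT (x d) (v d) := by
  simp only [numGT, Finset.card_filter]
  exact Finset.measurable_sum _ fun i _ => Measurable.ite
    (measurableSet_lt hv (measurable_pi_iff.1 hx i)) measurable_const measurable_const

lemma measurable_descStat (m r : ℕ) : Measurable fun x : Fin m → ℝ => descStat x r := by
  rcases lt_or_ge r m with hr | hr
  · refine measurable_of_Ioi fun c => ?_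
    simpa only [preimage, mem_Ioi, lt_descStat_iff _ hr]
      using measurableSet_lt measurable_const (measurable_numGT measurable_id' measurable_const)
  · simp only [descStat_of_le _ hr, measurable_const]

lemma measurable_refVec {q : ℕ} : Measurable (refVec (q := q)) :=
  measurable_pi_lambda _ fun _ => measurable_descStat _ _

variable {p n : ℕ} {x : Fin n → ℝ} {v : ℝ}

lemma descStat_eq_descStat_comp (e : Fin p ↪ Fin n) (hgt : ∀ j, v < x (e j))
    (hle : ∀ i ∉ range e, x i ≤ v) (hr : r < p) : descStat x r = descStat (x ∘ e) r := by
  have hn : r < n := hr.trans_le (by simpa using Fintype.card_le_of_embedding e)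
  obtain ⟨hle', hlt'⟩ := (descStat_eq_iff (x ∘ e) hr).1 rfl
  obtain ⟨j, hj⟩ := exists_eq_descStat (x ∘ e) hr
  refine (descStat_eq_iff x hn).2 ⟨?_, hlt'.trans_le (numGE_comp_embedding_le x e _)⟩
  rwa [← numGT_comp_embedding x e fun i hi => (hle i hi).trans (hj ▸ (hgt j).le)]

lemma descStat_eq_of_exceedances (e : Fin p ↪ Fin n) (hgt : ∀ j, v < x (e j))
    (hle : ∀ i ∉ range e, x i ≤ v) (hv : ∃ i, x i = v) : descStat x p = v := by
  obtain ⟨i, rfl⟩ := hv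
  have hnum : numGT x (x i) = p := by
    rw [← numGT_comp_embedding x e hle, numGT]
    simp [hgt]
  have hlt : p < numGE x (x i) := hnum ▸ numGT_lt_numGE_self x i
  have hn : p < n := hlt.trans_le (by simpa using numGE_le_card x (x i))
  exact (descStat_eq_iff x hn).2 ⟨hnum.le, hlt⟩

/-- The convention `Z_{0:q-1} = 0` built into `refVec` makes the last coordinate come out right:
the threshold `v` itself is the order statistic following the exceedances. -/
lemma descStat_eq_mul_descStat_add (e : Fin p ↪ Fin n) {u : Fin p → ℝ} {σ : ℝ} (hσ : 0 < σ)
    (hu : ∀ j, 0 < u j) (hx : ∀ j, x (e j) = σ * u j + v) (hle : ∀ i ∉ range e, x i ≤ v)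
    (hv : ∃ i, x i = v) (hr : r ≤ p) : descStat x r = σ * descStat u r + v := by
  have hgt : ∀ j, v < x (e j) := fun j => by have := mul_pos hσ (hu j); linarith [hx j]
  rcases hr.lt_or_eq with hr | rfl
  · have hcomp : x ∘ e = (fun z => σ * z + v) ∘ u := funext hx
    have hmono : StrictMono fun z => σ * z + v := fun _ _ h => by dsimp only; gcongr
    rw [descStat_eq_descStat_comp e hgt hle hr, hcomp, descStat_strictMono_comp hmono u hr]
  · rw [descStat_eq_of_exceedances e hgt hle hv, descStat_of_le u le_rfl, mul_zero, zero_add]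

end DescStat

section Kernel

variable {q n : ℕ} {K : (Fin q → ℝ) → ℝ}

lemma measurable_Km (hK : Measurable K) (m : ℕ) : Measurable (Km K m) :=
  hK.comp (measurable_pi_lambda _ fun _ => measurable_descStat _ _)

lemma LocScaleInvariant.Km_eq_refVec (hLS : LocScaleInvariant K) (e : Fin (q - 1) ↪ Fin n)
    {x : Fin n → ℝ} {u : Fin (q - 1) → ℝ} {σ v : ℝ} (hσ : 0 < σ) (hu : ∀ j, 0 < u j)
    (hx : ∀ j, x (e j) = σ * u j + v) (hle : ∀ i ∉ range e, x i ≤ v) (hv : ∃ i, x i = v) :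
    Km K n x = K (refVec u) := by
  rw [← hLS σ v hσ, Km]
  congr 1
  ext j
  exact descStat_eq_mul_descStat_add e hσ hu hx hle hv (by omega)

end Kernel

/-! ### Ranks -/

section Ranks

variable {ι α : Type*} [Fintype ι] [LinearOrder α] {x : ι → α}

lemma numGT_lt_numGT_of_lt {i j : ι} (h : x i < x j) : numGT x (x j) < numGT x (x i) :=
  (numGT_lt_numGE_self x j).trans_le (numGE_le_numGT x h)

lemma numGT_lt_card (x : ι → α) (i : ι) : numGT x (x i) < Fintype.card ι :=
  (numGT_lt_numGE_self x i).trans_le (numGE_le_card x _)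

lemma injective_numGT_self (hx : Function.Injective x) :
    Function.Injective fun i => numGT x (x i) := by
  intro i j hij
  by_contra hne
  rcases lt_or_gt_of_ne (hx.ne hne) with h | h
  · exact (numGT_lt_numGT_of_lt h).ne hij.symm
  · exact (numGT_lt_numGT_of_lt h).ne hij

lemma image_numGT_self (hx : Function.Injective x) :
    Finset.univ.image (fun i => numGT x (x i)) = Finset.range (Fintype.card ι) := by
  refine Finset.eq_of_subset_of_card_le ?_ ?_
  · exact Finset.image_subset_iff.2 fun i _ => Finset.mem_range.2 (numGT_lt_card x i)
  · rw [Finset.card_image_of_injective _ (injective_numGT_self hx), Finset.card_range,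
      Finset.card_univ]

lemma card_filter_numGT_lt (hx : Function.Injective x) (q : ℕ) :
    #{i | numGT x (x i) < q} = min q (Fintype.card ι) := by
  rw [← Finset.card_image_of_injective _ (injective_numGT_self hx),
    ← Finset.filter_image (p := (· < q)), image_numGT_self hx, ← Finset.card_range (min q _)]
  congr 1
  ext k
  simp [and_comm]

end Ranks

section Dominating

variable {ι α : Type*} [LinearOrder α] {x : ι → α} {I J : Finset ι}

/-- The tuples all of whose entries indexed by `I` lie strictly above all the other entries. -/
def dominatingSet (α : Type*) [LinearOrder α] (I : Finset ι) : Set (ι → α) :=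
  {x | ∀ i ∈ I, ∀ k ∉ I, x k < x i}

lemma eq_of_mem_dominatingSet (hcard : #I = #J) (hI : x ∈ dominatingSet α I)
    (hJ : x ∈ dominatingSet α J) : I = J := by
  by_contra hne
  obtain ⟨i, hiI, hiJ⟩ := Finset.not_subset.1 fun h =>
    hne (Finset.eq_of_subset_of_card_le h hcard.ge)
  obtain ⟨j, hjJ, hjI⟩ := Finset.not_subset.1 fun h =>
    hne (Finset.eq_of_subset_of_card_le h hcard.le).symm
  exact (hI i hiI j hjI).asymm (hJ j hjJ i hiJ)

lemma exists_mem_dominatingSet [Fintype ι] (hx : Function.Injective x) {p : ℕ}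
    (hp : p ≤ Fintype.card ι) : ∃ I : Finset ι, #I = p ∧ x ∈ dominatingSet α I := by
  refine ⟨Finset.univ.filter fun i => numGT x (x i) < p, ?_, ?_⟩
  · rw [card_filter_numGT_lt hx, min_eq_left hp]
  · intro i hi k hk
    simp only [Finset.mem_filter_univ, not_lt] at hi hk
    by_contra! hik
    exact (hi.trans_le hk).not_ge (numGT_anti x hik)

lemma measurableSet_dominatingSet [Finite ι] (I : Finset ι) :
    MeasurableSet (dominatingSet ℝ I) := by
  simp only [dominatingSet, ofPred_forall]
  exact .iInter fun i => .iInter fun _ => .iInter fun k => .iInter fun _ =>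
    measurableSet_lt (measurable_pi_apply k) (measurable_pi_apply i)

end Dominating

/-! ### Exchangeability of product measures -/

section Exchangeable

lemma measurePreserving_comp_equiv {ι κ α : Type*} [Fintype ι] [Fintype κ] [MeasurableSpace α]
    (μ : Measure α) [SigmaFinite μ] (e : ι ≃ κ) :
    MeasurePreserving (fun (x : κ → α) => x ∘ e) (Measure.pi fun _ => μ)
      (Measure.pi fun _ => μ) := by
  convert measurePreserving_piCongrLeft (fun _ : ι => μ) e.symm using 1
  ext x i
  rw [← e.symm_apply_apply i, MeasurableEquiv.piCongrLeft_apply_apply, e.symm_apply_apply,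
    Function.comp_apply]

lemma ae_ne_of_indepFun {Ω α : Type*} [MeasurableSpace Ω] [MeasurableSpace α] [MeasurableEq α]
    {P : Measure Ω} [IsProbabilityMeasure P] {X Y : Ω → α} (hX : AEMeasurable X P)
    (hY : AEMeasurable Y P) [NullSingletonClass (P.map Y)] (hXY : IndepFun X Y P) :
    ∀ᵐ ω ∂P, X ω ≠ Y ω := by
  have := Measure.isProbabilityMeasure_map hX
  have := Measure.isProbabilityMeasure_map hY
  have hdiag : (P.map X).prod (P.map Y) (diagonal α) = 0 := by
    rw [Measure.measure_prod_null measurableSet_diagonal]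
    refine .of_forall fun x => ?_
    simp [preimage, mem_diagonal_iff, measure_singleton, ofPred_eq_eq_singleton']
  rw [← (indepFun_iff_map_prod_eq_prod_map_map hX hY).1 hXY,
    Measure.map_apply_of_aemeasurable (hX.prodMk hY) measurableSet_diagonal] at hdiag
  simpa [ae_iff, preimage] using hdiag

variable {ι : Type*} [Fintype ι]

lemma ae_injective_pi {α : Type*} [MeasurableSpace α] [MeasurableEq α] (μ : Measure α)
    [IsProbabilityMeasure μ] [NullSingletonClass μ] :
    ∀ᵐ x ∂Measure.pi fun _ : ι => μ, Function.Injective x := by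
  have hindep : iIndepFun (fun (i : ι) (x : ι → α) => x i) (Measure.pi fun _ => μ) :=
    iIndepFun_pi (X := fun _ => id) fun _ => aemeasurable_id
  simp only [Function.Injective, ae_all_iff]
  intro i j
  by_cases h : i = j
  · simp [h]
  · have hmap : (Measure.pi fun _ : ι => μ).map (fun x => x j) = μ :=
      (measurePreserving_eval (fun _ : ι => μ) j).map_eq
    have : NullSingletonClass ((Measure.pi fun _ : ι => μ).map fun x => x j) := by rwa [hmap]
    filter_upwards [ae_ne_of_indepFun (measurable_pi_apply i).aemeasurable
      (measurable_pi_apply j).aemeasurable (hindep.indepFun h)] with x hx hxij using absurd hxij hx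

/-- The tuples in which every entry indexed by `s` is among the `q` largest. -/
def allInTop (q : ℕ) (s : Finset ι) : Set (ι → ℝ) := {x | ∀ i ∈ s, numGT x (x i) < q}

lemma measurableSet_allInTop (q : ℕ) (s : Finset ι) : MeasurableSet (allInTop q s) := by
  simp only [allInTop, ofPred_forall]
  exact .iInter fun i => .iInter fun _ =>
    measurableSet_lt (measurable_numGT measurable_id (measurable_pi_apply i)) measurable_const

lemma preimage_comp_equiv_allInTop (q : ℕ) (s : Finset ι) (σ : Equiv.Perm ι) :
    (fun x : ι → ℝ => x ∘ σ) ⁻¹' allInTop q s = allInTop q (s.map σ.toEmbedding) := by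
  ext x
  simp only [allInTop, mem_preimage, mem_ofPred_eq, numGT_comp_equiv, Finset.forall_mem_map,
    Equiv.coe_toEmbedding, Function.comp_apply]

lemma measure_allInTop_congr (μ : Measure ℝ) [SigmaFinite μ] (q : ℕ) {s t : Finset ι}
    (h : #s = #t) : Measure.pi (fun _ => μ) (allInTop q s) =
      Measure.pi (fun _ => μ) (allInTop q t) := by
  set σ : Equiv.Perm ι := (Finset.equivOfCardEq h).extendSubtype
  have hσ : s.map σ.toEmbedding = t := by
    refine Finset.eq_of_subset_of_card_le ?_ (by simp [h])
    intro k hk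
    obtain ⟨i, hi, rfl⟩ := Finset.mem_map.1 hk
    exact Equiv.extendSubtype_mem _ i hi
  rw [← (measurePreserving_comp_equiv μ σ).measure_preimage
    (measurableSet_allInTop q s).nullMeasurableSet, preimage_comp_equiv_allInTop, hσ]

lemma sum_powersetCard_indicator_allInTop_le (q k : ℕ) {x : ι → ℝ} (hx : Function.Injective x) :
    ∑ t ∈ Finset.univ.powersetCard k, (allInTop q t).indicator (1 : (ι → ℝ) → ℝ≥0∞) x
      ≤ q.choose k := by
  have hfilter : (Finset.univ.powersetCard k).filter (x ∈ allInTop q ·)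
      = (Finset.univ.filter fun i => numGT x (x i) < q).powersetCard k := by
    ext t
    rw [Finset.mem_filter]
    simp [allInTop, Finset.subset_iff, and_comm]
  simp only [indicator_apply, Pi.one_apply]
  rw [Finset.sum_boole, hfilter, Finset.card_powersetCard, card_filter_numGT_lt hx]
  exact_mod_cast Nat.choose_le_choose k (min_le_left q _)

lemma choose_mul_measure_allInTop_le (μ : Measure ℝ) [IsProbabilityMeasure μ]
    [NullSingletonClass μ] (q : ℕ) (s : Finset ι) :
    (Fintype.card ι).choose #s * Measure.pi (fun _ => μ) (allInTop q s) ≤ q.choose #s := by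
  set ν := Measure.pi fun _ : ι => μ
  calc (Fintype.card ι).choose #s * ν (allInTop q s)
      = ∑ t ∈ Finset.univ.powersetCard #s, ν (allInTop q t) := by
        rw [Finset.sum_congr rfl fun t ht =>
          measure_allInTop_congr μ q (Finset.mem_powersetCard.1 ht).2, Finset.sum_const,
          Finset.card_powersetCard, Finset.card_univ, nsmul_eq_mul]
    _ = ∫⁻ x, ∑ t ∈ Finset.univ.powersetCard #s, (allInTop q t).indicator 1 x ∂ν := by
        rw [lintegral_finsetSum _ fun t _ =>
          measurable_one.indicator (measurableSet_allInTop q t)]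
        simp only [lintegral_indicator_one, measurableSet_allInTop]
    _ ≤ ∫⁻ _, q.choose #s ∂ν := lintegral_mono_ae <| (ae_injective_pi μ).mono fun _ hx =>
        sum_powersetCard_indicator_allInTop_le q #s hx
    _ = q.choose #s := by simp

lemma measureReal_allInTop_le (μ : Measure ℝ) [IsProbabilityMeasure μ] [NullSingletonClass μ]
    (q : ℕ) (s : Finset ι) : (Measure.pi fun _ => μ).real (allInTop q s)
      ≤ q.choose #s / (Fintype.card ι).choose #s := by
  have hpos : 0 < (Fintype.card ι).choose #s := Nat.choose_pos (Finset.card_le_univ s)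
  rw [le_div_iff₀' (by exact_mod_cast hpos)]
  have h := ENNReal.toReal_mono (by simp) (choose_mul_measure_allInTop_le μ q s)
  simpa [Measure.real] using h

end Exchangeable

/-! ### Threshold-stable laws -/

/-- Threshold stability: at almost every threshold `v`, the part of `μ` above `v` is, up to its
mass, an increasing affine image of `μ`. This is the property of the generalized Pareto laws
behind the peaks-over-threshold method. -/
def ThresholdStable (μ : Measure ℝ) : Prop :=
  ∀ᵐ v ∂μ, ∃ σ > 0, μ.restrict (Ioi v) = μ (Ioi v) • μ.map fun z => σ * z + v

section PiThreshold

variable {ι : Type*} [Fintype ι] {μ : Measure ℝ} [IsProbabilityMeasure μ]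

lemma pi_const_smul {α : Type*} [MeasurableSpace α] (ν : Measure α) [IsFiniteMeasure ν]
    {c : ℝ≥0∞} (hc : c ≠ ⊤) :
    (Measure.pi fun _ : ι => c • ν) = c ^ Fintype.card ι • Measure.pi fun _ => ν := by
  have := ν.smul_finite hc
  refine Measure.pi_eq fun s _ => ?_
  simp [Measure.pi_pi, Finset.prod_mul_distrib]

lemma restrict_pi_Ioi {v σ : ℝ}
    (hσ : μ.restrict (Ioi v) = μ (Ioi v) • μ.map fun z => σ * z + v) :
    (Measure.pi fun _ : ι => μ).restrict (univ.pi fun _ => Ioi v)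
      = Measure.pi (fun _ : ι => μ) (univ.pi fun _ => Ioi v) •
        (Measure.pi fun _ : ι => μ).map fun u i => σ * u i + v := by
  have hmeas : Measurable fun z : ℝ => σ * z + v := by fun_prop
  have := Measure.isProbabilityMeasure_map (μ := μ) hmeas.aemeasurable
  rw [Measure.restrict_pi_pi, hσ, pi_const_smul _ (measure_ne_top μ _),
    Measure.pi_map_pi fun _ => hmeas.aemeasurable, Measure.pi_pi, Finset.prod_const,
    Finset.card_univ]

lemma measure_pi_Ioi_inter_preimage {v σ : ℝ} (hσ : σ ≠ 0)
    (hμ : μ.restrict (Ioi v) = μ (Ioi v) • μ.map fun z => σ * z + v) {C : Set (ι → ℝ)}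
    (hC : MeasurableSet C) :
    Measure.pi (fun _ : ι => μ) ((univ.pi fun _ => Ioi v) ∩ (fun x i => (x i - v) / σ) ⁻¹' C)
      = Measure.pi (fun _ : ι => μ) (univ.pi fun _ => Ioi v) * Measure.pi (fun _ => μ) C := by
  have hpre : MeasurableSet ((fun (x : ι → ℝ) i => (x i - v) / σ) ⁻¹' C) :=
    hC.preimage (by fun_prop)
  have hid : (fun (u : ι → ℝ) i => σ * u i + v) ⁻¹' ((fun x i => (x i - v) / σ) ⁻¹' C) = C := by
    simp only [preimage_preimage, add_sub_cancel_right, mul_div_cancel_left₀ _ hσ, preimage_id']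
  rw [inter_comm, ← Measure.restrict_apply hpre, restrict_pi_Ioi hμ, Measure.smul_apply,
    Measure.map_apply (by fun_prop) hpre, hid, smul_eq_mul]

lemma measure_eq_sum_dominatingSet_inter [NullSingletonClass μ] {p : ℕ} (hp : p ≤ Fintype.card ι)
    {A : Set (ι → ℝ)} (hA : MeasurableSet A) : Measure.pi (fun _ => μ) A
      = ∑ I ∈ Finset.univ.powersetCard p, Measure.pi (fun _ => μ) (dominatingSet ℝ I ∩ A) := by
  have hcover : ∀ᵐ x ∂Measure.pi fun _ : ι => μ,
      x ∈ ⋃ I ∈ (Finset.univ : Finset ι).powersetCard p, dominatingSet ℝ I := by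
    filter_upwards [ae_injective_pi μ] with x hx
    obtain ⟨I, hI, hxI⟩ := exists_mem_dominatingSet hx hp
    simp only [mem_iUnion, Finset.mem_powersetCard_univ]
    exact ⟨I, hI, hxI⟩
  have hdisj : ((Finset.univ : Finset ι).powersetCard p : Set (Finset ι)).PairwiseDisjoint
      fun I => dominatingSet ℝ I ∩ A := by
    intro I hI J hJ hne
    rw [Finset.mem_coe, Finset.mem_powersetCard_univ] at hI hJ
    exact disjoint_left.2 fun x hxI hxJ =>
      hne (eq_of_mem_dominatingSet (hI.trans hJ.symm) hxI.1 hxJ.1)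
  rw [← measure_biUnion_finset hdisj fun I _ => (measurableSet_dominatingSet I).inter hA,
    ← iUnion₂_inter]
  exact (Measure.measure_inter_eq_of_ae hcover).symm

end PiThreshold

section Glue

variable {ι α : Type*} [DecidableEq ι] {I : Finset ι}

/-- The tuple with entries `x` on `I` and `y` off `I`. -/
def glue (I : Finset ι) (x : {i // i ∈ I} → α) (y : {i // i ∉ I} → α) (i : ι) : α :=
  if h : i ∈ I then x ⟨i, h⟩ else y ⟨i, h⟩

lemma glue_of_mem (x : {i // i ∈ I} → α) (y : {i // i ∉ I} → α) (i : {i // i ∈ I}) :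
    glue I x y i = x i :=
  dif_pos i.2

lemma glue_of_notMem (x : {i // i ∈ I} → α) (y : {i // i ∉ I} → α) (i : {i // i ∉ I}) :
    glue I x y i = y i :=
  dif_neg i.2

lemma measurePreserving_glue [Fintype ι] [MeasurableSpace α] (μ : Measure α) [SigmaFinite μ]
    (I : Finset ι) : MeasurePreserving (fun p => glue I p.1 p.2)
      ((Measure.pi fun _ => μ).prod (Measure.pi fun _ => μ)) (Measure.pi fun _ => μ) := by
  convert (measurePreserving_piEquivPiSubtypeProd (fun _ : ι => μ) (· ∈ I)).symm
  rfl

lemma glue_mem_dominatingSet_iff [LinearOrder α] {x : {i // i ∈ I} → α} {y : {i // i ∉ I} → α}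
    {k : {i // i ∉ I}} (hk : ∀ l, y l ≤ y k) :
    glue I x y ∈ dominatingSet α I ↔ ∀ i, y k < x i := by
  refine ⟨fun h i => ?_, fun h i hi l hl => ?_⟩
  · simpa only [glue_of_mem, glue_of_notMem] using h i i.2 k k.2
  · simpa only [← glue_of_mem x y ⟨i, hi⟩, ← glue_of_notMem x y ⟨l, hl⟩]
      using (hk ⟨l, hl⟩).trans_lt (h ⟨i, hi⟩)

end Glue

section TopPartLaw

variable {μ : Measure ℝ} [IsProbabilityMeasure μ] {q n : ℕ} {K : (Fin q → ℝ) → ℝ}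
  {I : Finset (Fin n)} {y : {i // i ∉ I} → ℝ} {k : {i // i ∉ I}} {σ : ℝ}

lemma LocScaleInvariant.Km_glue (hLS : LocScaleInvariant K) (e : Fin (q - 1) ≃ {i // i ∈ I})
    {x : {i // i ∈ I} → ℝ} (hk : ∀ l, y l ≤ y k) (hσ : 0 < σ) (hx : ∀ i, y k < x i) :
    Km K n (glue I x y) = K (refVec fun j => (x (e j) - y k) / σ) := by
  refine hLS.Km_eq_refVec (e.toEmbedding.trans (.subtype _)) hσ
    (fun j => div_pos (sub_pos.2 (hx (e j))) hσ) (fun j => ?_) (fun i hi => ?_)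
    ⟨k, glue_of_notMem x y k⟩
  · simp [glue_of_mem, mul_div_cancel₀ _ hσ.ne']
  · have hiI : i ∉ I := fun h => hi ⟨e.symm ⟨i, h⟩, by simp⟩
    exact (glue_of_notMem x y ⟨i, hiI⟩).trans_le (hk _)

lemma LocScaleInvariant.preimage_dominatingSet_inter_preimage_Km
    (hLS : LocScaleInvariant K) (e : Fin (q - 1) ≃ {i // i ∈ I}) (hk : ∀ l, y l ≤ y k)
    (hσ : 0 < σ) (B : Set ℝ) :
    (glue I · y) ⁻¹' (dominatingSet ℝ I ∩ Km K n ⁻¹' B)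
      = (univ.pi fun _ => Ioi (y k)) ∩
        (fun x i => (x i - y k) / σ) ⁻¹' ((· ∘ e) ⁻¹' ((K ∘ refVec) ⁻¹' B)) := by
  ext x
  rw [mem_preimage, mem_inter_iff, glue_mem_dominatingSet_iff hk, mem_inter_iff, mem_univ_pi]
  refine and_congr_right fun hx => ?_
  rw [mem_preimage, hLS.Km_glue e hk hσ hx]
  rfl

lemma LocScaleInvariant.measure_dominatingSet_inter_preimage_Km (hLS : LocScaleInvariant K)
    (hμ : ThresholdStable μ) (hK : Measurable K) (hI : #I = q - 1) (hqn : q - 1 < n)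
    {B : Set ℝ} (hB : MeasurableSet B) :
    Measure.pi (fun _ => μ) (dominatingSet ℝ I ∩ Km K n ⁻¹' B)
      = Measure.pi (fun _ => μ) (dominatingSet ℝ I) *
        Measure.pi (fun _ => μ) ((K ∘ refVec) ⁻¹' B) := by
  let e : Fin (q - 1) ≃ {i // i ∈ I} := (I.orderIsoOfFin hI).toEquiv
  have hglue := measurePreserving_glue μ I
  have hcomp := measurePreserving_comp_equiv μ e
  have hE : MeasurableSet (dominatingSet ℝ I) := measurableSet_dominatingSet I
  have hEB : MeasurableSet (dominatingSet ℝ I ∩ Km K n ⁻¹' B) := hE.inter (measurable_Km hK n hB)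
  have hG : MeasurableSet ((K ∘ refVec) ⁻¹' B) := (hK.comp measurable_refVec) hB
  have hne : Nonempty {i // i ∉ I} := by
    obtain ⟨i, -, hi⟩ := Finset.exists_mem_notMem_of_card_lt_card
      (s := I) (t := Finset.univ) (by simpa [hI] using hqn)
    exact ⟨i, hi⟩
  rw [← hglue.measure_preimage hEB.nullMeasurableSet, ← hglue.measure_preimage hE.nullMeasurableSet,
    Measure.prod_apply_symm (hglue.measurable hEB), Measure.prod_apply_symm (hglue.measurable hE),
    ← lintegral_mul_const _ (measurable_measure_prodMk_right (hglue.measurable hE))]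
  refine lintegral_congr_ae ?_
  filter_upwards [ae_all_iff.2 fun k : {i // i ∉ I} =>
    Measure.tendsto_eval_ae_ae.eventually hμ] with y hy
  obtain ⟨k, hk⟩ := Finite.exists_max y
  obtain ⟨σ, hσ, hstable⟩ := hy k
  have hbox : (glue I · y) ⁻¹' dominatingSet ℝ I = univ.pi fun _ => Ioi (y k) :=
    Set.ext fun x => (glue_mem_dominatingSet_iff hk).trans mem_univ_pi.symm
  calc Measure.pi (fun _ => μ) ((glue I · y) ⁻¹' (dominatingSet ℝ I ∩ Km K n ⁻¹' B))
      = Measure.pi (fun _ => μ) (univ.pi fun _ => Ioi (y k)) *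
          Measure.pi (fun _ => μ) ((· ∘ e) ⁻¹' ((K ∘ refVec) ⁻¹' B)) := by
        rw [hLS.preimage_dominatingSet_inter_preimage_Km e hk hσ,
          measure_pi_Ioi_inter_preimage hσ.ne' hstable (hcomp.measurable hG)]
    _ = Measure.pi (fun _ => μ) ((glue I · y) ⁻¹' dominatingSet ℝ I) *
          Measure.pi (fun _ => μ) ((K ∘ refVec) ⁻¹' B) := by
        rw [hbox, hcomp.measure_preimage hG.nullMeasurableSet]

theorem LocScaleInvariant.map_Km [NullSingletonClass μ] (hLS : LocScaleInvariant K)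
    (hμ : ThresholdStable μ) (hK : Measurable K) (hqn : q - 1 < n) :
    (Measure.pi fun _ : Fin n => μ).map (Km K n)
      = (Measure.pi fun _ : Fin (q - 1) => μ).map (K ∘ refVec) := by
  have hp : q - 1 ≤ Fintype.card (Fin n) := by simpa using hqn.le
  ext B hB
  rw [Measure.map_apply (measurable_Km hK n) hB,
    Measure.map_apply (hK.comp measurable_refVec) hB,
    measure_eq_sum_dominatingSet_inter hp (measurable_Km hK n hB),
    Finset.sum_congr rfl fun I hI => hLS.measure_dominatingSet_inter_preimage_Km hμ hK
      (Finset.mem_powersetCard_univ.1 hI) hqn hB, ← Finset.sum_mul]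
  have hone := measure_eq_sum_dominatingSet_inter (μ := μ) hp MeasurableSet.univ
  simp only [inter_univ, measure_univ] at hone
  rw [← hone, one_mul]

end TopPartLaw

/-! ### Generalized Pareto laws -/

section Pareto

variable {t r : ℝ}

lemma ae_le_paretoMeasure (t r : ℝ) : ∀ᵐ x ∂paretoMeasure t r, t ≤ x := by
  refine (ae_withDensity_iff (measurable_paretoPDFReal t r).ennreal_ofReal).2 (ae_of_all _ ?_)
  exact fun x hx => not_lt.1 fun h => hx (paretoPDF_of_lt h)

lemma paretoMeasure_Ioi_of_ge (ht : 0 < t) (hr : 0 < r) {s : ℝ} (hs : t ≤ s) :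
    paretoMeasure t r (Ioi s) = ENNReal.ofReal ((t / s) ^ r) := by
  have hs0 : 0 < s := ht.trans_le hs
  have hexp : -(r + 1) < -1 := by linarith
  have hnonneg : 0 ≤ᵐ[volume.restrict (Ioi s)] fun x => r * t ^ r * x ^ (-(r + 1)) :=
    ae_restrict_of_forall_mem measurableSet_Ioi fun x hx => by
      have : 0 < x := hs0.trans hx
      positivity
  calc paretoMeasure t r (Ioi s)
      = ∫⁻ x in Ioi s, ENNReal.ofReal (r * t ^ r * x ^ (-(r + 1))) := by
        rw [paretoMeasure, withDensity_apply _ measurableSet_Ioi]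
        exact setLIntegral_congr_fun measurableSet_Ioi fun x hx =>
          paretoPDF_of_le (hs.trans (le_of_lt hx))
    _ = ENNReal.ofReal (∫ x in Ioi s, r * t ^ r * x ^ (-(r + 1))) :=
        (ofReal_integral_eq_lintegral_ofReal
          ((integrableOn_Ioi_rpow_of_lt hexp hs0).const_mul _) hnonneg).symm
    _ = ENNReal.ofReal ((t / s) ^ r) := by
        rw [integral_const_mul, integral_Ioi_rpow_of_lt hexp hs0, div_rpow ht.le hs0.le,
          neg_add, neg_add_cancel_right, rpow_neg hs0.le]
        field_simp

lemma paretoMeasure_Ioi_of_le (ht : 0 < t) (hr : 0 < r) {s : ℝ} (hs : s ≤ t) :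
    paretoMeasure t r (Ioi s) = 1 := by
  have := isProbabilityMeasure_paretoMeasure ht hr
  refine prob_le_one.antisymm ?_
  calc 1 = paretoMeasure t r (Ioi t) := by simp [paretoMeasure_Ioi_of_ge ht hr le_rfl, ht.ne']
    _ ≤ paretoMeasure t r (Ioi s) := measure_mono (Ioi_subset_Ioi hs)

lemma restrict_Ioi_paretoMeasure (ht : 0 < t) (hr : 0 < r) {v : ℝ} (hv : t ≤ v) :
    (paretoMeasure t r).restrict (Ioi v)
      = paretoMeasure t r (Ioi v) • (paretoMeasure t r).map fun x => v / t * x := by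
  have := isProbabilityMeasure_paretoMeasure ht hr
  have hv0 : 0 < v := ht.trans_le hv
  have hmeas : Measurable fun x : ℝ => v / t * x := by fun_prop
  have := Measure.isProbabilityMeasure_map (μ := paretoMeasure t r) hmeas.aemeasurable
  refine ext_of_generate_finite (range Ioi)
    (borel_eq_generateFrom_Ioi ℝ ▸ BorelSpace.measurable_eq) isPiSystem_Ioi ?_ (by simp)
  rintro _ ⟨s, rfl⟩
  have hpre : (fun x => v / t * x) ⁻¹' Ioi s = Ioi (s * t / v) := by
    rw [preimage_const_mul_Ioi₀ s (div_pos hv0 ht), div_div_eq_mul_div]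
  rw [Measure.restrict_apply measurableSet_Ioi, Measure.smul_apply,
    Measure.map_apply hmeas measurableSet_Ioi, hpre, Ioi_inter_Ioi, smul_eq_mul]
  rcases le_total s v with hs | hs
  · have hts : s * t / v ≤ t := by
      rw [div_le_iff₀ hv0, mul_comm t]
      gcongr
    rw [max_eq_right hs, paretoMeasure_Ioi_of_le ht hr hts, mul_one]
  · have hs0 : 0 < s := hv0.trans_le hs
    have hts : t ≤ s * t / v := by
      rw [le_div_iff₀ hv0, mul_comm s]
      gcongr
    rw [max_eq_left hs, paretoMeasure_Ioi_of_ge ht hr (hv.trans hs),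
      paretoMeasure_Ioi_of_ge ht hr hv, paretoMeasure_Ioi_of_ge ht hr hts,
      ← ENNReal.ofReal_mul (by positivity), ← mul_rpow (by positivity) (by positivity)]
    congr 2
    field_simp

end Pareto

section GeneralizedPareto

variable (γ : ℝ)

lemma hGamma_mul {t u : ℝ} (ht : 0 < t) (hu : 0 < u) :
    hGamma γ (t * u) = t ^ γ * hGamma γ u + hGamma γ t := by
  unfold hGamma
  split_ifs with h
  · rw [h, rpow_zero, log_mul ht.ne' hu.ne', one_mul, add_comm]
  · rw [mul_rpow ht.le hu.le]
    field_simp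
    ring

lemma hGamma_pos {u : ℝ} (hu : 1 < u) : 0 < hGamma γ u := by
  unfold hGamma
  split_ifs with h
  · exact log_pos hu
  · rcases lt_or_gt_of_ne h with h | h
    · exact div_pos_of_neg_of_neg (sub_neg.2 (rpow_lt_one_of_one_lt_of_neg hu h)) h
    · exact div_pos (sub_pos.2 (one_lt_rpow hu h)) h

lemma strictMonoOn_hGamma : StrictMonoOn (hGamma γ) (Ioi 0) := by
  intro t (ht : 0 < t) u _ htu
  have hpos : 0 < t ^ γ * hGamma γ (u / t) :=
    mul_pos (rpow_pos_of_pos ht γ) (hGamma_pos γ ((one_lt_div ht).2 htu))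
  have hmul := hGamma_mul γ ht (div_pos (ht.trans htu) ht)
  rw [mul_div_cancel₀ _ ht.ne'] at hmul
  linarith

lemma ae_one_le_pareto1 : ∀ᵐ x ∂pareto1, 1 ≤ x := ae_le_paretoMeasure 1 1

lemma ae_mem_image_hGamma : ∀ᵐ v ∂gpMeasure γ, v ∈ hGamma γ '' Ici 1 := by
  have hinj : InjOn (hGamma γ) (Ici 1) :=
    (strictMonoOn_hGamma γ).injOn.mono (Ici_subset_Ioi.2 one_pos)
  have himage : MeasurableSet (hGamma γ '' Ici 1) :=
    measurableSet_Ici.image_of_measurable_injOn (measurable_hGamma γ) hinj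
  refine (ae_map_iff (measurable_hGamma γ).aemeasurable himage).2 ?_
  filter_upwards [ae_one_le_pareto1] with t ht
  exact ⟨t, ht, rfl⟩

instance : NullSingletonClass (gpMeasure γ) where
  measure_singleton z := by
    have hsub : (hGamma γ ⁻¹' {z} ∩ Ioi 0).Subsingleton := fun x hx y hy =>
      (strictMonoOn_hGamma γ).injOn hx.2 hy.2 (hx.1.trans hy.1.symm)
    have hnull : pareto1 (hGamma γ ⁻¹' {z} ∩ Ioi 0) = 0 := by
      rw [pareto1, paretoMeasure]
      exact hsub.measure_zero _
    have hpos : ∀ᵐ x ∂pareto1, x ∈ Ioi 0 :=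
      ae_one_le_pareto1.mono fun x hx => one_pos.trans_le hx
    rw [gpMeasure, Measure.map_apply (measurable_hGamma γ) (measurableSet_singleton z),
      ← Measure.measure_inter_eq_of_ae hpos, inter_comm, hnull]

lemma restrict_Ioi_gpMeasure {t : ℝ} (ht : 1 ≤ t) :
    (gpMeasure γ).restrict (Ioi (hGamma γ t))
      = pareto1 (Ioi t) • (gpMeasure γ).map fun z => t ^ γ * z + hGamma γ t := by
  have ht0 : 0 < t := one_pos.trans_le ht
  have hlevel : hGamma γ ⁻¹' Ioi (hGamma γ t) =ᵐ[pareto1] Ioi t := by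
    filter_upwards [ae_one_le_pareto1] with x hx
    exact propext ((strictMonoOn_hGamma γ).lt_iff_lt ht0 (one_pos.trans_le hx))
  have hscale : hGamma γ ∘ (t * ·) =ᵐ[pareto1] (fun z => t ^ γ * z + hGamma γ t) ∘ hGamma γ := by
    filter_upwards [ae_one_le_pareto1] with x hx
    exact hGamma_mul γ ht0 (one_pos.trans_le hx)
  have hpareto : pareto1.restrict (Ioi t) = pareto1 (Ioi t) • pareto1.map (t * ·) := by
    simpa only [pareto1, div_one] using restrict_Ioi_paretoMeasure one_pos one_pos ht
  rw [gpMeasure, Measure.restrict_map (measurable_hGamma γ) measurableSet_Ioi,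
    Measure.restrict_congr_set hlevel, hpareto, Measure.map_smul,
    Measure.map_map (measurable_hGamma γ) (by fun_prop),
    Measure.map_map (by fun_prop) (measurable_hGamma γ), Measure.map_congr hscale]

theorem thresholdStable_gpMeasure : ThresholdStable (gpMeasure γ) := by
  filter_upwards [ae_mem_image_hGamma γ] with v hv
  obtain ⟨t, ht, rfl⟩ := hv
  have hmeas : Measurable fun z => t ^ γ * z + hGamma γ t := by fun_prop
  have := Measure.isProbabilityMeasure_map (μ := gpMeasure γ) hmeas.aemeasurable
  have hmass : gpMeasure γ (Ioi (hGamma γ t)) = pareto1 (Ioi t) := by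
    rw [← Measure.restrict_apply_univ, restrict_Ioi_gpMeasure γ ht]
    simp
  exact ⟨t ^ γ, rpow_pos_of_pos (one_pos.trans_le ht) γ,
    hmass ▸ restrict_Ioi_gpMeasure γ ht⟩

end GeneralizedPareto

/-! ### Top-`q` events -/

section TopEvent

/-- The event that every `Z_i` with `i ∈ s` is among the `q` largest of the values
`(Z_a)_{a ∈ S}`. -/
def topEvent (q : ℕ) {Ω : Type*} (Z : ℕ → Ω → ℝ) (S s : Finset ℕ) : Set Ω :=
  {ω | ∀ i ∈ s, inTopQ q Z S i ω}

variable {Ω : Type*} {q : ℕ} {Z : ℕ → Ω → ℝ} {S T s t : Finset ℕ} {i j : ℕ}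

lemma topEvent_anti (h : S ⊆ T) : topEvent q Z T s ⊆ topEvent q Z S s := fun _ hω i hi =>
  (Finset.card_le_card (Finset.filter_subset_filter _ h)).trans_lt (hω i hi)

lemma inTopQ_iff_numGT_lt (ω : Ω) :
    inTopQ q Z S i ω ↔ numGT (fun a : S => Z a ω) (Z i ω) < q := by
  rw [inTopQ, numGT, Finset.card_filter, Finset.card_filter, ← Finset.sum_coe_sort]

lemma preimage_allInTop_eq_topEvent (hs : s ⊆ S) :
    (fun ω (a : S) => Z a ω) ⁻¹' allInTop q (s.subtype (· ∈ S)) = topEvent q Z S s := by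
  ext ω
  simp only [allInTop, topEvent, mem_preimage, mem_ofPred_eq, Finset.mem_subtype, Subtype.forall,
    inTopQ_iff_numGT_lt]
  exact ⟨fun h i hi => h i (hs hi) hi, fun h i _ hi => h i hi⟩

lemma inTopQ_or_pair_subset :
    {ω | ∀ k ∈ ({i, j} : Finset ℕ), inTopQ q Z S k ω ∨ inTopQ q Z T k ω}
      ⊆ topEvent q Z S {i, j} ∪ topEvent q Z T {i, j} ∪
        ((topEvent q Z S {i} ∩ topEvent q Z T {j}) ∪
          (topEvent q Z S {j} ∩ topEvent q Z T {i})) := by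
  intro ω
  simp only [topEvent, Finset.mem_insert, Finset.mem_singleton, forall_eq_or_imp, forall_eq,
    mem_union, mem_inter_iff, mem_ofPred_eq]
  tauto

variable [MeasurableSpace Ω] {P : Measure Ω}

lemma measureReal_le_card_filter_le [IsFiniteMeasure P] {ι : Type*} {O : Finset ι}
    {p : ι → Ω → Prop} [∀ ω, DecidablePred (p · ω)] {k : ℕ} {c : ℝ}
    (hc : ∀ s ∈ O.powersetCard k, P.real {ω | ∀ i ∈ s, p i ω} ≤ c) :
    P.real {ω | k ≤ #{i ∈ O | p i ω}} ≤ (#O).choose k * c := by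
  have hsub : {ω | k ≤ #{i ∈ O | p i ω}} ⊆ ⋃ s ∈ O.powersetCard k, {ω | ∀ i ∈ s, p i ω} := by
    intro ω hω
    obtain ⟨s, hs, hcard⟩ := Finset.exists_subset_card_eq hω
    refine mem_iUnion₂.2 ⟨s, Finset.mem_powersetCard.2 ⟨?_, hcard⟩, fun i hi => ?_⟩
    · exact hs.trans (Finset.filter_subset _ _)
    · exact (Finset.mem_filter.1 (hs hi)).2
  calc P.real {ω | k ≤ #{i ∈ O | p i ω}}
      ≤ P.real (⋃ s ∈ O.powersetCard k, {ω | ∀ i ∈ s, p i ω}) :=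
        measureReal_mono hsub (measure_ne_top _ _)
    _ ≤ ∑ s ∈ O.powersetCard k, P.real {ω | ∀ i ∈ s, p i ω} := measureReal_biUnion_finset_le _ _
    _ ≤ ∑ _s ∈ O.powersetCard k, c := Finset.sum_le_sum hc
    _ = (#O).choose k * c := by rw [Finset.sum_const, Finset.card_powersetCard, nsmul_eq_mul]

lemma measureReal_topEvent_inter_of_disjoint (hZ : ∀ i, Measurable (Z i)) (hI : iIndepFun Z P)
    (hST : Disjoint S T) (hs : s ⊆ S) (ht : t ⊆ T) :
    P.real (topEvent q Z S s ∩ topEvent q Z T t)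
      = P.real (topEvent q Z S s) * P.real (topEvent q Z T t) := by
  rw [← preimage_allInTop_eq_topEvent hs, ← preimage_allInTop_eq_topEvent ht, measureReal_def,
    measureReal_def, measureReal_def, ← ENNReal.toReal_mul,
    (hI.indepFun_finset S T hST hZ).measure_inter_preimage_eq_mul _ _
    (measurableSet_allInTop q _) (measurableSet_allInTop q _)]

variable [IsProbabilityMeasure P] {μ : Measure ℝ}

lemma measurePreserving_pi_of_iIndepFun (hZ : ∀ i, Measurable (Z i)) (hI : iIndepFun Z P)
    (hD : ∀ i, P.map (Z i) = μ) {ι : Type*} [Fintype ι] {g : ι → ℕ} (hg : Function.Injective g) :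
    MeasurePreserving (fun ω i => Z (g i) ω) P (Measure.pi fun _ => μ) := by
  refine ⟨measurable_pi_lambda _ fun i => hZ (g i), ?_⟩
  have hmap := (iIndepFun_iff_map_fun_eq_pi_map fun i => (hZ (g i)).aemeasurable).1
    (hI.precomp hg)
  simpa only [hD] using hmap

variable [IsProbabilityMeasure μ] [NullSingletonClass μ]

lemma measureReal_topEvent_le (hZ : ∀ i, Measurable (Z i)) (hI : iIndepFun Z P)
    (hD : ∀ i, P.map (Z i) = μ) (hs : s ⊆ S) :
    P.real (topEvent q Z S s) ≤ q.choose #s / (#S).choose #s := by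
  have hcard : #(s.subtype (· ∈ S)) = #s := by
    rw [Finset.card_subtype, Finset.filter_true_of_mem fun i hi => hs hi]
  rw [← preimage_allInTop_eq_topEvent hs,
    (measurePreserving_pi_of_iIndepFun hZ hI hD Subtype.val_injective).measureReal_preimage
      (measurableSet_allInTop q _).nullMeasurableSet]
  simpa only [hcard, Fintype.card_coe] using measureReal_allInTop_le μ q (s.subtype (· ∈ S))

/-- Moving `j` from `S` to `T \ S` makes the two blocks disjoint, and shrinking a block only
enlarges its top-`q` events. -/
lemma measureReal_topEvent_singleton_inter_le (hZ : ∀ i, Measurable (Z i)) (hI : iIndepFun Z P)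
    (hD : ∀ i, P.map (Z i) = μ) (hi : i ∈ S ∩ T) (hj : j ∈ S ∩ T) (hij : i ≠ j) :
    P.real (topEvent q Z S {i} ∩ topEvent q Z T {j})
      ≤ q ^ 2 / (((#S : ℝ) - 1) * ((#T : ℝ) - #(S ∩ T) + 1)) := by
  rw [Finset.mem_inter] at hi hj
  have hS' : {i} ⊆ S.erase j := by simpa [hij] using hi.1
  have hT' : {j} ⊆ insert j (T \ S) := by simp
  have hdisj : Disjoint (S.erase j) (insert j (T \ S)) := by
    rw [Finset.disjoint_insert_right]
    exact ⟨Finset.notMem_erase j S, Finset.disjoint_sdiff.mono_left (S.erase_subset j)⟩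
  have hcardS : (#(S.erase j) : ℝ) = #S - 1 := Finset.cast_card_erase_of_mem hj.1
  have hcardT : (#(insert j (T \ S)) : ℝ) = #T - #(S ∩ T) + 1 := by
    rw [Finset.card_insert_of_notMem (by simp [hj.1]), Nat.cast_add_one]
    have h : (#(T \ S) : ℝ) + #(T ∩ S) = #T := mod_cast Finset.card_sdiff_add_card_inter T S
    rw [Finset.inter_comm S T, ← h, add_sub_cancel_right]
  calc P.real (topEvent q Z S {i} ∩ topEvent q Z T {j})
      ≤ P.real (topEvent q Z (S.erase j) {i} ∩ topEvent q Z (insert j (T \ S)) {j}) :=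
        measureReal_mono (inter_subset_inter (topEvent_anti (S.erase_subset j))
          (topEvent_anti (Finset.insert_subset hj.2 Finset.sdiff_subset)))
    _ = P.real (topEvent q Z (S.erase j) {i}) * P.real (topEvent q Z (insert j (T \ S)) {j}) :=
        measureReal_topEvent_inter_of_disjoint hZ hI hdisj hS' hT'
    _ ≤ q / #(S.erase j) * (q / #(insert j (T \ S))) := by
        gcongr
        · simpa using measureReal_topEvent_le (q := q) hZ hI hD hS'
        · simpa using measureReal_topEvent_le (q := q) hZ hI hD hT'
    _ = q ^ 2 / (((#S : ℝ) - 1) * ((#T : ℝ) - #(S ∩ T) + 1)) := by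
        rw [hcardS, hcardT, div_mul_div_comm, sq]

lemma measureReal_topEvent_pair_le (hZ : ∀ i, Measurable (Z i)) (hI : iIndepFun Z P)
    (hD : ∀ i, P.map (Z i) = μ) (hi : i ∈ S) (hj : j ∈ S) (hij : i ≠ j) :
    P.real (topEvent q Z S {i, j}) ≤ (q ^ 2 - q) / (((#S : ℝ) - 1) * #S) := by
  have hsub : {i, j} ⊆ S := Finset.insert_subset hi (Finset.singleton_subset_iff.2 hj)
  have h := measureReal_topEvent_le (q := q) hZ hI hD hsub
  rw [Finset.card_pair hij, Nat.cast_choose_two, Nat.cast_choose_two,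
    div_div_div_cancel_right₀ two_ne_zero] at h
  convert h using 1
  ring

lemma measureReal_inTopQ_or_pair_le (hZ : ∀ i, Measurable (Z i)) (hI : iIndepFun Z P)
    (hD : ∀ i, P.map (Z i) = μ) {m : ℕ} (hS : #S = m) (hT : #T = m) (hi : i ∈ S ∩ T)
    (hj : j ∈ S ∩ T) (hij : i ≠ j) :
    P.real {ω | ∀ k ∈ ({i, j} : Finset ℕ), inTopQ q Z S k ω ∨ inTopQ q Z T k ω}
      ≤ 2 * (2 * (q : ℝ) ^ 2 - q) / (((m : ℝ) - 1) * ((m : ℝ) - #(S ∩ T) + 1)) := by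
  set D : ℝ := ((m : ℝ) - 1) * ((m : ℝ) - #(S ∩ T) + 1)
  have hℓ : (2 : ℝ) ≤ #(S ∩ T) := mod_cast Finset.one_lt_card.2 ⟨i, hi, j, hj, hij⟩
  have hℓm : (#(S ∩ T) : ℝ) ≤ m := mod_cast hS ▸ Finset.card_le_card Finset.inter_subset_left
  have hpair {R : Finset ℕ} (hR : #R = m) (hi : i ∈ R) (hj : j ∈ R) :
      P.real (topEvent q Z R {i, j}) ≤ ((q : ℝ) ^ 2 - q) / D := by
    have hq : (0 : ℝ) ≤ (q : ℝ) ^ 2 - q := sub_nonneg.2 (mod_cast Nat.le_self_pow two_ne_zero q)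
    have hm1 : (0 : ℝ) < (m : ℝ) - 1 := by linarith
    have hmℓ : (0 : ℝ) < (m : ℝ) - #(S ∩ T) + 1 := by linarith
    have h := measureReal_topEvent_pair_le (q := q) hZ hI hD hi hj hij
    rw [hR] at h
    exact h.trans (div_le_div_of_nonneg_left hq (mul_pos hm1 hmℓ)
      (mul_le_mul_of_nonneg_left (by linarith) hm1.le))
  have hcross {i j : ℕ} (hi : i ∈ S ∩ T) (hj : j ∈ S ∩ T) (hij : i ≠ j) :
      P.real (topEvent q Z S {i} ∩ topEvent q Z T {j}) ≤ q ^ 2 / D := by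
    simpa only [hS, hT] using measureReal_topEvent_singleton_inter_le hZ hI hD hi hj hij
  have hiST := Finset.mem_inter.1 hi
  have hjST := Finset.mem_inter.1 hj
  calc _ ≤ _ := measureReal_mono inTopQ_or_pair_subset
    _ ≤ P.real (topEvent q Z S {i, j}) + P.real (topEvent q Z T {i, j}) +
          (P.real (topEvent q Z S {i} ∩ topEvent q Z T {j}) +
            P.real (topEvent q Z S {j} ∩ topEvent q Z T {i})) :=
        (measureReal_union_le _ _).trans
          (add_le_add (measureReal_union_le _ _) (measureReal_union_le _ _))
    _ ≤ ((q ^ 2 - q) / D + (q ^ 2 - q) / D) + (q ^ 2 / D + q ^ 2 / D) :=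
        add_le_add (add_le_add (hpair hS hiST.1 hjST.1) (hpair hT hiST.2 hjST.2))
          (add_le_add (hcross hi hj hij) (hcross hj hi hij.symm))
    _ = 2 * (2 * (q : ℝ) ^ 2 - q) / D := by ring

lemma measureReal_two_le_card_inTopQ_or_le (hZ : ∀ i, Measurable (Z i)) (hI : iIndepFun Z P)
    (hD : ∀ i, P.map (Z i) = μ) {m : ℕ} (hS : #S = m) (hT : #T = m) :
    P.real {ω | 2 ≤ #{i ∈ S ∩ T | inTopQ q Z S i ω ∨ inTopQ q Z T i ω}}
      ≤ (#(S ∩ T) : ℝ) * (#(S ∩ T) - 1) / 2 *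
          (2 * (2 * (q : ℝ) ^ 2 - q) / (((m : ℝ) - 1) * ((m : ℝ) - #(S ∩ T) + 1))) := by
  rw [← Nat.cast_choose_two]
  refine measureReal_le_card_filter_le fun s hs => ?_
  obtain ⟨hsub, hcard⟩ := Finset.mem_powersetCard.1 hs
  obtain ⟨i, j, hij, rfl⟩ := Finset.card_eq_two.1 hcard
  exact measureReal_inTopQ_or_pair_le hZ hI hD hS hT (hsub (by simp)) (hsub (by simp)) hij

end TopEvent

/-! ### Moments of the kernel on an event -/

section Moment

lemma toReal_div_toReal_le_one {p r : ℝ≥0∞} (h : p ≤ r) : p.toReal / r.toReal ≤ 1 := by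
  rcases eq_or_ne r ∞ with rfl | hr
  · simp
  · exact div_le_one_of_le₀ (ENNReal.toReal_mono hr h) ENNReal.toReal_nonneg

lemma abs_setIntegral_mul_le_lpNorm_mul {α : Type*} [MeasurableSpace α] {ν : Measure α}
    [IsFiniteMeasure ν] {f g : α → ℝ} {p p' r : ℝ≥0∞} [ENNReal.HolderTriple p p' r] (hr : 1 ≤ r)
    (hf : MemLp f p ν) (hg : MemLp g p' ν) (A : Set α) :
    |∫ ω in A, f ω * g ω ∂ν|
      ≤ lpNorm f p ν * lpNorm g p' ν * ν.real A ^ (1 - 1 / r.toReal) := by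
  have hexp : 0 ≤ 1 - 1 / r.toReal := sub_nonneg.2 (by simpa using toReal_div_toReal_le_one hr)
  have hfA := hf.1.restrict (s := A)
  have hgA := hg.1.restrict (s := A)
  have hE : ‖∫ ω in A, f ω * g ω ∂ν‖ₑ
      ≤ eLpNorm f p ν * eLpNorm g p' ν * ν A ^ (1 - 1 / r.toReal) :=
    calc ‖∫ ω in A, f ω * g ω ∂ν‖ₑ
        ≤ ∫⁻ ω in A, ‖f ω * g ω‖ₑ ∂ν := enorm_integral_le_lintegral_enorm _
      _ = eLpNorm (f • g) 1 (ν.restrict A) := eLpNorm_one_eq_lintegral_enorm.symm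
      _ ≤ eLpNorm (f • g) r (ν.restrict A) * ν A ^ (1 - 1 / r.toReal) := by
          simpa using eLpNorm_le_eLpNorm_mul_rpow_measure_univ hr (hfA.smul hgA)
      _ ≤ eLpNorm f p (ν.restrict A) * eLpNorm g p' (ν.restrict A)
            * ν A ^ (1 - 1 / r.toReal) := by
          gcongr
          exact eLpNorm_smul_le_mul_eLpNorm hgA hfA
      _ ≤ eLpNorm f p ν * eLpNorm g p' ν * ν A ^ (1 - 1 / r.toReal) := by
          gcongr ?_ * ?_ * _ <;> exact eLpNorm_restrict_le _ _ _ _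
  rw [← ofReal_lpNorm hf, ← ofReal_lpNorm hg, ← ofReal_measureReal,
    ENNReal.ofReal_rpow_of_nonneg measureReal_nonneg hexp,
    ← ENNReal.ofReal_mul lpNorm_nonneg,
    ← ENNReal.ofReal_mul (mul_nonneg lpNorm_nonneg lpNorm_nonneg),
    Real.enorm_eq_ofReal_abs] at hE
  exact (ENNReal.ofReal_le_ofReal_iff (mul_nonneg (mul_nonneg lpNorm_nonneg lpNorm_nonneg)
    (Real.rpow_nonneg measureReal_nonneg _))).1 hE

lemma abs_setIntegral_mul_le_lpNorm_mul_two {α : Type*} [MeasurableSpace α] {ν : Measure α}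
    [IsFiniteMeasure ν] {f g : α → ℝ} {p : ℝ≥0∞} (hp : 2 ≤ p)
    (hf : MemLp f p ν) (hg : MemLp g p ν) (A : Set α) :
    |∫ ω in A, f ω * g ω ∂ν|
      ≤ lpNorm f p ν * lpNorm g p ν * ν.real A ^ (1 - 2 / p.toReal) := by
  have : ENNReal.HolderTriple p p (p / 2) := ⟨by
    rw [ENNReal.inv_div (by simp) (by simp), ← two_mul, div_eq_mul_inv]⟩
  have h1 : 1 ≤ p / 2 := by rwa [ENNReal.le_div_iff_mul_le (by simp) (by simp), one_mul]
  simpa using abs_setIntegral_mul_le_lpNorm_mul h1 hf hg A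

variable {q : ℕ} {K : (Fin q → ℝ) → ℝ}

lemma memLp_comp_refVec {γ a : ℝ} (ha : 0 < a) (hK : Measurable K) (hMom : MomentCond γ K) :
    MemLp (K ∘ refVec) (ENNReal.ofReal a) (gpPi γ (q - 1)) := by
  refine ⟨(hK.comp measurable_refVec).aestronglyMeasurable, ?_⟩
  rw [eLpNorm_lt_top_iff_lintegral_rpow_enorm_lt_top (by simpa using ha) ENNReal.ofReal_ne_top,
    ENNReal.toReal_ofReal ha.le]
  simpa only [Function.comp_apply, Real.enorm_eq_ofReal_abs,
    ENNReal.ofReal_rpow_of_nonneg (abs_nonneg _) ha.le] using hMom a ha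

lemma normKa_eq_lpNorm {γ a : ℝ} (ha : 0 < a) (hK : Measurable K) :
    normKa γ K a = lpNorm (K ∘ refVec) (ENNReal.ofReal a) (gpPi γ (q - 1)) := by
  rw [lpNorm_eq_integral_norm_rpow_toReal (by simpa using ha) ENNReal.ofReal_ne_top
    (hK.comp measurable_refVec).aestronglyMeasurable, ENNReal.toReal_ofReal ha.le, ← one_div]
  rfl

variable {Ω : Type*} [MeasurableSpace Ω] {P : Measure Ω} [IsProbabilityMeasure P]
  {μ : Measure ℝ} [IsProbabilityMeasure μ] [NullSingletonClass μ] {Z : ℕ → Ω → ℝ}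

lemma LocScaleInvariant.identDistrib_KmOn (hLS : LocScaleInvariant K) (hμ : ThresholdStable μ)
    (hK : Measurable K) (hZ : ∀ i, Measurable (Z i)) (hI : iIndepFun Z P)
    (hD : ∀ i, P.map (Z i) = μ) {S : Finset ℕ} (hS : q - 1 < #S) :
    IdentDistrib (KmOn K Z S) (K ∘ refVec) P (Measure.pi fun _ : Fin (q - 1) => μ) := by
  have hsub := measurePreserving_pi_of_iIndepFun hZ hI hD
    (g := fun j => (S.orderIsoOfFin rfl j).1)
    (Subtype.val_injective.comp (S.orderIsoOfFin rfl).injective)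
  have hKm := measurable_Km hK #S
  refine ⟨(hKm.comp hsub.measurable).aemeasurable, (hK.comp measurable_refVec).aemeasurable, ?_⟩
  rw [← hLS.map_Km hμ hK hS, ← hsub.map_eq, Measure.map_map hKm hsub.measurable]
  rfl

lemma LocScaleInvariant.abs_setIntegral_KmOn_mul_KmOn_le (hLS : LocScaleInvariant K)
    (hμ : ThresholdStable μ) (hK : Measurable K) {p : ℝ≥0∞} (hp : 2 ≤ p)
    (hKp : MemLp (K ∘ refVec) p (Measure.pi fun _ : Fin (q - 1) => μ))
    (hZ : ∀ i, Measurable (Z i)) (hI : iIndepFun Z P) (hD : ∀ i, P.map (Z i) = μ)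
    {S T : Finset ℕ} (hS : q - 1 < #S) (hT : q - 1 < #T) (A : Set Ω) :
    |∫ ω in A, KmOn K Z S ω * KmOn K Z T ω ∂P|
      ≤ lpNorm (K ∘ refVec) p (Measure.pi fun _ : Fin (q - 1) => μ) ^ 2 *
          P.real A ^ (1 - 2 / p.toReal) := by
  have hident {R : Finset ℕ} (hR : q - 1 < #R) := hLS.identDistrib_KmOn hμ hK hZ hI hD hR
  have hmem {R : Finset ℕ} (hR : q - 1 < #R) : MemLp (KmOn K Z R) p P :=
    (hident hR).memLp_iff.2 hKp
  have hnorm {R : Finset ℕ} (hR : q - 1 < #R) :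
      lpNorm (KmOn K Z R) p P = lpNorm (K ∘ refVec) p (Measure.pi fun _ : Fin (q - 1) => μ) := by
    rw [← toReal_eLpNorm (hmem hR).1, (hident hR).eLpNorm_eq, toReal_eLpNorm hKp.1]
  calc |∫ ω in A, KmOn K Z S ω * KmOn K Z T ω ∂P|
      ≤ lpNorm (KmOn K Z S) p P * lpNorm (KmOn K Z T) p P * P.real A ^ (1 - 2 / p.toReal) :=
        abs_setIntegral_mul_le_lpNorm_mul_two hp (hmem hS) (hmem hT) A
    _ = _ := by rw [hnorm hS, hnorm hT, sq]

end Moment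

/-! ### The event of two common extremes -/

lemma Icc_inter_Icc_shift {ℓ m : ℕ} (h : ℓ ≤ m) :
    Finset.Icc 1 m ∩ Finset.Icc (m - ℓ + 1) (2 * m - ℓ) = Finset.Icc (m - ℓ + 1) m := by
  ext i
  simp only [Finset.mem_inter, Finset.mem_Icc]
  lia

theorem xi_on_N_ge_two_general
    {Ω : Type*} [MeasurableSpace Ω] {P : Measure Ω} [IsProbabilityMeasure P]
    {μ : Measure ℝ} [IsProbabilityMeasure μ] [NullSingletonClass μ] (hμ : ThresholdStable μ)
    {q : ℕ} {K : (Fin q → ℝ) → ℝ} (hK : Measurable K) (hLS : LocScaleInvariant K)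
    {p : ℝ≥0∞} (hp : 2 ≤ p)
    (hKp : MemLp (K ∘ refVec) p (Measure.pi fun _ : Fin (q - 1) => μ))
    {S T : Finset ℕ} {ℓ m : ℕ} (hS : #S = m) (hT : #T = m) (hST : #(S ∩ T) = ℓ) (hqm : q - 1 < m)
    {Z : ℕ → Ω → ℝ} (hZ : ∀ i, Measurable (Z i)) (hI : iIndepFun Z P)
    (hD : ∀ i, P.map (Z i) = μ) :
    |∫ ω in {ω | 2 ≤ #{i ∈ S ∩ T | inTopQ q Z S i ω ∨ inTopQ q Z T i ω}},
        KmOn K Z S ω * KmOn K Z T ω ∂P|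
      ≤ lpNorm (K ∘ refVec) p (Measure.pi fun _ : Fin (q - 1) => μ) ^ 2 *
          ((ℓ : ℝ) * (ℓ - 1) / 2) ^ (1 - 2 / p.toReal) *
          (2 * (2 * (q : ℝ) ^ 2 - q) / (((m : ℝ) - 1) * (m - ℓ + 1))) ^ (1 - 2 / p.toReal) := by
  have hℓm : (ℓ : ℝ) ≤ m := mod_cast hST ▸ hS ▸ Finset.card_le_card Finset.inter_subset_left
  have hm1 : (0 : ℝ) ≤ (m : ℝ) - 1 := sub_nonneg.2 (mod_cast (q - 1).zero_le.trans_lt hqm)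
  have hchoose : (0 : ℝ) ≤ (ℓ : ℝ) * (ℓ - 1) / 2 := by
    rw [← Nat.cast_choose_two]
    positivity
  have hpair : 0 ≤ 2 * (2 * (q : ℝ) ^ 2 - q) / (((m : ℝ) - 1) * (m - ℓ + 1)) := by
    have hq : (q : ℝ) ≤ (q : ℝ) ^ 2 := mod_cast Nat.le_self_pow two_ne_zero q
    refine div_nonneg ?_ (mul_nonneg hm1 ?_) <;> linarith [sq_nonneg (q : ℝ)]
  have hexp : 0 ≤ 1 - 2 / p.toReal := sub_nonneg.2 (by simpa using toReal_div_toReal_le_one hp)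
  refine (hLS.abs_setIntegral_KmOn_mul_KmOn_le hμ hK hp hKp hZ hI hD (hS ▸ hqm) (hT ▸ hqm)
    _).trans ?_
  rw [mul_assoc, ← Real.mul_rpow hchoose hpair, ← hST]
  gcongr
  exact measureReal_two_le_card_inTopQ_or_le hZ hI hD hS hT

/-- Lemma: the event `N_{ℓ,m} ≥ 2`.
For all `a > 2`,
`|E[Ξ_{ℓ,m}; N_{ℓ,m} ≥ 2]| ≤ ‖K‖_a² (ℓ(ℓ-1)/2)^{1-2/a} (2(2q²-q)/((m-1)(m-ℓ+1)))^{1-2/a}`. -/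
theorem xi_on_N_ge_two
    {Ω : Type*} [MeasurableSpace Ω] (P : Measure Ω) [IsProbabilityMeasure P]
    (γ : ℝ) (q : ℕ) (hq : 3 ≤ q)
    (K : (Fin q → ℝ) → ℝ) (hKmeas : Measurable K)
    (hLS : LocScaleInvariant K)
    (hNonconst : ∃ x y : Fin q → ℝ, K x ≠ K y)
    (hMom : MomentCond γ K)
    (ℓ m : ℕ) (hℓ : 2 ≤ ℓ) (hm : ℓ + q ≤ m)
    (Z : ℕ → Ω → ℝ) (hZmeas : ∀ i, Measurable (Z i))
    (hIndep : iIndepFun Z P)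
    (hDist : ∀ i, Measure.map (Z i) P = gpMeasure γ) :
    ∀ a : ℝ, 2 < a →
      |∫ ω in {ω | 2 ≤ Ncount q Z ℓ m ω}, XiRV K Z ℓ m ω ∂P|
        ≤ (normKa γ K a) ^ 2 * ((ℓ : ℝ) * ((ℓ : ℝ) - 1) / 2) ^ (1 - 2/a) *
            (2 * (2 * (q : ℝ) ^ 2 - (q : ℝ)) /
              (((m : ℝ) - 1) * ((m : ℝ) - (ℓ : ℝ) + 1))) ^ (1 - 2/a) := by
  intro a ha
  have ha0 : 0 < a := two_pos.trans ha
  have hST := Icc_inter_Icc_shift (show ℓ ≤ m by lia)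
  have h := xi_on_N_ge_two_general (thresholdStable_gpMeasure γ) hKmeas hLS
    (p := ENNReal.ofReal a) (by simpa using ha.le) (memLp_comp_refVec ha0 hKmeas hMom)
    (S := Finset.Icc 1 m) (T := Finset.Icc (m - ℓ + 1) (2 * m - ℓ)) (ℓ := ℓ) (m := m)
    (by simp) (by rw [Nat.card_Icc]; lia) (by rw [hST, Nat.card_Icc]; lia) (by lia)
    hZmeas hIndep hDist
  rw [hST, ENNReal.toReal_ofReal ha0.le] at h
  rw [normKa_eq_lpNorm ha0 hKmeas]
  exact h

end
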